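/- Let A be a totally ordered alphabet and let J and C be sentences over A with |J| = |C|. If wℓ(J) ⪰ wℓ(C) in the reverse lexicographic order on compositions (i.e., at the first index where the compositions of word lengths differ, wℓ(J) has the smaller entry) and K_{J,C} ≠ 0, then J = C; moreover K_{J,J} = 1. Consequently, the transition matrix from the colored dual immaculate functions to the colored monomial functions is upper unitriangular, and the colored dual immaculate functions {𝔖*_J} form a basis of QSym_A. -/

import Mathlib

open scoped BigOperators

namespace ColoredImm

variable {A : Type*}

/-- A *weak sentence* over the alphabet `A`: a finite list of words (words may be empty). -/
abbrev Sentence (A : Type*) := List (List A)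

/-- A genuine *sentence*: all of its words are nonempty. -/
def IsSentence (I : Sentence A) : Prop := ∀ w ∈ I, w ≠ []

/-- The size `|I|` of a sentence: its total number of letters. -/
def size (I : Sentence A) : ℕ := (I.map List.length).sum

/-- The word lengths `wℓ(I)` of a sentence. -/
def wl (I : Sentence A) : List ℕ := I.map List.length

/-- The flattening of a weak sentence: delete all empty words. -/
def flattenWS (I : Sentence A) : Sentence A := I.filter (fun w => !w.isEmpty)

/-- `Refines J I` means `J ⪯ I`: the sentence `I` can be obtained by concatenating
some adjacent words of `J` (so `J` is a refinement of `I`, and `I` a coarsening of `J`). -/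
def Refines (J I : Sentence A) : Prop :=
  ∃ P : List (Sentence A), (∀ p ∈ P, p ≠ []) ∧ P.flatten = J ∧ P.map List.flatten = I

/-! ### Fillings and colored immaculate tableaux -/

/-- An integer filling of a diagram, recorded row by row. -/
abbrev Filling := List (List ℕ)

/-- The entry of a filling at box `b = (row, column)` (0-indexed), with default `0`. -/
def entryAt (f : Filling) (b : ℕ × ℕ) : ℕ := (f.getD b.1 []).getD b.2 0

/-- `IsCIT I f`: `f` is a colored immaculate tableau of shape `I`; that is, `f` has the
same shape as the colored composition diagram of `I`, its entries are positive integers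
weakly increasing left to right along each row, and the entries in the first column are
strictly increasing from top to bottom. -/
def IsCIT (I : Sentence A) (f : Filling) : Prop :=
  f.map List.length = I.map List.length ∧
  (∀ row ∈ f, row.Chain' (· ≤ ·)) ∧
  (f.filterMap List.head?).Chain' (· < ·) ∧
  (∀ x ∈ f.flatten, 1 ≤ x)

/-- The colors (letters of `w`) of the boxes of one row whose entry (in `row`) is `v`,
read from left to right. -/
def rowWith (w : List A) (row : List ℕ) (v : ℕ) : List A :=
  ((w.zip row).filter (fun p => p.2 == v)).map Prod.fst

/-- The word of the type of a tableau at value `v`: the colors of all boxes with entry `v`,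
read left to right, from the bottom row up to the top row. -/
def typeWord (I : Sentence A) (f : Filling) (v : ℕ) : List A :=
  (((I.zip f).reverse).map (fun p => rowWith p.1 p.2 v)).flatten

/-- `HasType I f B` : the tableau `f` (of shape `I`) has type the weak sentence `B`,
i.e. for every positive integer `v`, the colors of the boxes of `f` containing `v`
(read left to right, bottom to top) form the `v`-th word of `B`. -/
def HasType (I : Sentence A) (f : Filling) (B : Sentence A) : Prop :=
  ∀ v, 1 ≤ v → typeWord I f v = B.getD (v - 1) []

/-- `K_{J,B}`: the number of colored immaculate tableaux of shape `J` and type `B`. -/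
noncomputable def KJB (J B : Sentence A) : ℕ :=
  Set.ncard {f : Filling | IsCIT J f ∧ HasType J f B}

/-! ### Standardization -/

/-- The list of boxes of a filling. -/
def boxes (f : Filling) : List (ℕ × ℕ) :=
  ((List.range f.length).map
    (fun r => (List.range (f.getD r []).length).map (fun j => (r, j)))).flatten

/-- `beforeB f b b'`: box `b` comes strictly before box `b'` in the type-reading order of `f`
(smaller entries first; among equal entries, lower rows first, and within a row left to right). -/
def beforeB (f : Filling) (b b' : ℕ × ℕ) : Bool :=
  entryAt f b < entryAt f b' ||
    (entryAt f b == entryAt f b' && (b'.1 < b.1 || (b.1 == b'.1 && b.2 < b'.2)))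

/-- The standardization of a filling: each box is renumbered (starting from `1`)
according to its position in the type-reading order. -/
def stdFill (f : Filling) : Filling :=
  (List.range f.length).map (fun r =>
    (List.range (f.getD r []).length).map (fun j =>
      1 + ((boxes f).filter (fun b' => beforeB f b' (r, j))).length))

/-- The number of boxes of a filling. -/
def nBoxes (f : Filling) : ℕ := f.flatten.length

/-- A filling of `n` boxes is standard when its entries are exactly `1, …, n`,
each appearing once. -/
def IsStandardF (f : Filling) : Prop := f.flatten.Perm (List.range' 1 (nBoxes f))

/-! ### Descents and the colored descent composition -/

/-- The (0-indexed) row containing the value `v` in a standard filling. -/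
def rowOf (f : Filling) (v : ℕ) : ℕ := f.findIdx (fun row => row.contains v)

/-- The sorted list of descents of a standard filling: those `i` with `1 ≤ i ≤ n-1`
such that `i+1` lies in a strictly lower row than `i`. -/
def descList (f : Filling) : List ℕ :=
  (List.range' 1 (nBoxes f - 1)).filter (fun i => decide (rowOf f i < rowOf f (i + 1)))

/-- The composition of `n` associated to a set of split positions `d_1 < … < d_k`:
`(d_1, d_2 - d_1, …, n - d_k)`. -/
def compOf (ds : List ℕ) (n : ℕ) : List ℕ :=
  List.zipWith (fun a b => b - a) (0 :: ds) (ds ++ [n])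

/-- Split a word into a sentence according to a composition. -/
def splitByComp : List A → List ℕ → List (List A)
  | _, [] => []
  | w, a :: rest => w.take a :: splitByComp (w.drop a) rest

/-- The color of the box containing the value `v` in a standard filling of shape `I`. -/
def colorOf [Inhabited A] (I : Sentence A) (f : Filling) (v : ℕ) : A :=
  (I.getD (rowOf f v) []).getD ((f.getD (rowOf f v) []).findIdx (fun x => x == v)) default

/-- The maximal word of the colored descent composition of a standard filling of shape `I`:
the colors of its boxes read in the order of their integer entries. -/
def readWord [Inhabited A] (I : Sentence A) (f : Filling) : List A :=
  (List.range (nBoxes f)).map (fun i => colorOf I f (i + 1))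

/-- The colored descent composition `co_A(U)` of a standard colored immaculate tableau:
read the colors of the boxes in the order of their entries, starting a new word
immediately after each descent. -/
def coA [Inhabited A] (I : Sentence A) (f : Filling) : Sentence A :=
  if nBoxes f = 0 then [] else splitByComp (readWord I f) (compOf (descList f) (nBoxes f))

/-- `L_{J,C}`: the number of standard colored immaculate tableaux of shape `J`
with colored descent composition `C`. -/
noncomputable def LJC [Inhabited A] (J C : Sentence A) : ℕ :=
  Set.ncard {f : Filling | IsCIT J f ∧ IsStandardF f ∧ coA J f = C}

/-! ### The colored quasisymmetric functions `QSym_A` -/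

/-- A (normal form of a) monomial in the partially commutative variables `x_{a,i}`:
a pair consisting of the list of words `(w_1, …, w_m)` and the list of (strictly
increasing, positive) second indices `(j_1 < … < j_m)`, representing
`x_{w_1,j_1} ⋯ x_{w_m,j_m}`. -/
abbrev Mono (A : Type*) := List (List A) × List ℕ

/-- A colored quasisymmetric "series": a formal linear combination of monomials,
recorded by its coefficient function.  `QSym_A` itself is the span of the colored
monomial functions `MQ I` inside this space. -/
abbrev QSymA (A : Type*) := Mono A → ℚ

/-- Validity of a monomial normal form: words and indices match up, the indices are
strictly increasing positive integers, and all words are nonempty. -/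
def ValidMono (m : Mono A) : Prop :=
  m.1.length = m.2.length ∧ m.2.Chain' (· < ·) ∧ (∀ j ∈ m.2, 1 ≤ j) ∧ ∀ w ∈ m.1, w ≠ []

open Classical in
/-- The colored monomial quasisymmetric function `M_I`: the sum of all monomials
`x_{w_1,j_1} ⋯ x_{w_m,j_m}` with `j_1 < … < j_m`, where `I = (w_1, …, w_m)`. -/
noncomputable def MQ (I : Sentence A) : QSymA A := fun m =>
  if m.1 = I ∧ ValidMono m then 1 else 0

/-- The largest entry of a filling. -/
def maxEntry (f : Filling) : ℕ := f.flatten.foldr max 0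

/-- The monomial `x_T` of a colored immaculate tableau `T = f` of shape `I`:
for `T` of type `B = (u_1, …, u_j)` it is `x_{u_1,1} x_{u_2,2} ⋯ x_{u_j,j}`
(empty words are skipped). -/
def monoOf (I : Sentence A) (f : Filling) : Mono A :=
  let vs := ((List.range (maxEntry f)).map (· + 1)).filter (fun v => !(typeWord I f v).isEmpty)
  (vs.map (typeWord I f), vs)

/-- The colored dual immaculate function `𝔖*_J = Σ_T x_T`, the sum of the monomials of all
colored immaculate tableaux `T` of shape `J` (its coefficient at a monomial `m` is the
number of such tableaux with `x_T = m`). -/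
noncomputable def dualImm (J : Sentence A) : QSymA A := fun m =>
  (Set.ncard {f : Filling | IsCIT J f ∧ monoOf J f = m} : ℚ)

/-- The colored fundamental quasisymmetric function `F_I = Σ_{J ⪯ I} M_J`. -/
noncomputable def FQ (I : Sentence A) : QSymA A :=
  ∑ᶠ J ∈ {J : Sentence A | Refines J I}, MQ J

/-! ### The colored immaculate descent graph -/

/-- Edges of the colored immaculate descent graph: a directed edge from `I` to `J` (`J ≠ I`)
whenever some standard colored immaculate tableau of shape `I` has colored descent
composition `J`. -/
def IsEdge [Inhabited A] (I J : Sentence A) : Prop := J ≠ I ∧ LJC I J ≠ 0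

/-- Directed paths from `I` to `K` in the colored immaculate descent graph, recorded by
their (nonempty) lists of successive vertices; the path `[I]` is the empty path at `I`. -/
def PathsFromTo [Inhabited A] (I K : Sentence A) : Set (List (Sentence A)) :=
  {p | p.head? = some I ∧ p.getLast? = some K ∧ p.Chain' IsEdge}

/-- The signed weight `(-1)^{ℓ(𝒫)} prod(𝒫)` of a directed path `𝒫`:
`ℓ(𝒫)` is its number of edges and `prod(𝒫)` the product of its edge weights `L_{I,J}`. -/
noncomputable def pathWeight [Inhabited A] (p : List (Sentence A)) : ℚ :=
  ((-1 : ℚ)) ^ (p.length - 1) * ((p.zip p.tail).map (fun e => (LJC e.1 e.2 : ℚ))).prod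

/-- `L⁻¹_{I,K} = Σ_𝒫 (-1)^{ℓ(𝒫)} prod(𝒫)`, summed over all directed paths `𝒫`
from `I` to `K` in the colored immaculate descent graph. -/
noncomputable def Linv [Inhabited A] (I K : Sentence A) : ℚ :=
  ∑ᶠ p ∈ PathsFromTo I K, pathWeight p

/-! ### The colored noncommutative symmetric functions `NSym_A` -/

/-- A formal series over the complete homogeneous basis `{H_I}` of `NSym_A`, recorded by its
coefficient function on (weak) sentences.  `NSym_A` itself consists of the finitely
supported elements supported on genuine sentences; see `InNSym`. -/
abbrev NSymA (A : Type*) := Sentence A → ℚ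

/-- Membership in `NSym_A` proper: finitely supported, and supported on genuine sentences. -/
def InNSym (f : NSymA A) : Prop :=
  (Function.support f).Finite ∧ ∀ I, f I ≠ 0 → IsSentence I

open Classical in
/-- The colored complete homogeneous noncommutative symmetric function
`H_I = H_{w_1} ⋯ H_{w_k}`. -/
noncomputable def Hd (I : Sentence A) : NSymA A := fun J => if J = I then 1 else 0

/-- `H_w` for a single word `w`, with `H_∅ = 1`. -/
noncomputable def Hw (w : List A) : NSymA A := if w.isEmpty then Hd [] else Hd [w]

/-- Multiplication in `NSym_A` (the concatenation product, extended to series):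
`H_I · H_J = H_{I ⬝ J}`. -/
def mulN (f g : NSymA A) : NSymA A := fun I =>
  ∑ j ∈ Finset.range (I.length + 1), f (I.take j) * g (I.drop j)

/-- The duality pairing `⟨·,·⟩ : NSym_A × QSym_A → ℚ`, determined by
`⟨H_I, M_J⟩ = δ_{I,J}`: the `M_I`-coefficient of a quasisymmetric function is its
coefficient on the monomial `x_{w_1,1} x_{w_2,2} ⋯ x_{w_k,k}`. -/
noncomputable def pairNQ (G : NSymA A) (F : QSymA A) : ℚ :=
  ∑ᶠ I ∈ {I : Sentence A | IsSentence I}, G I * F (I, List.range' 1 I.length)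

/-- All ways of splitting each word of a list of words into a prefix and a suffix. -/
def splitsOf : List (List A) → List (List (List A) × List (List A))
  | [] => [([], [])]
  | w :: ws =>
      (((splitsOf ws).map (fun p =>
        (List.range (w.length + 1)).map (fun t => (w.take t :: p.1, w.drop t :: p.2))))).flatten

/-- Restriction of a candidate monomial: keep only the nonempty words together with
their indices. -/
def restrictMono (ws : List (List A)) (js : List ℕ) : Mono A :=
  let ps := (ws.zip js).filter (fun p => !p.1.isEmpty)
  (ps.map Prod.fst, ps.map Prod.snd)

/-- The product of colored quasisymmetric series: the coefficient of a monomial in `F·G`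
is the sum, over all ways of writing each of its words as a concatenation of a word of a
monomial of `F` (on the left) and a word of a monomial of `G` (on the right), of the
products of the corresponding coefficients. -/
def mulQ (F G : QSymA A) : QSymA A := fun m =>
  ((splitsOf m.1).map (fun p => F (restrictMono p.1 m.2) * G (restrictMono p.2 m.2))).sum

/-- The right perp operator `M^⊸` of `M ∈ QSym_A`, the linear operator on `NSym_A`
determined by `⟨M^⊸(H), G⟩ = ⟨H, G·M⟩`; explicitly, for the dual bases `{M_I}` and `{H_I}`,
`M^⊸(H) = Σ_I ⟨H, M_I · M⟩ H_I`. -/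
noncomputable def rperp (M : QSymA A) (H : NSymA A) : NSymA A :=
  ∑ᶠ I ∈ {I : Sentence A | IsSentence I}, pairNQ H (mulQ (MQ I) M) • Hd I

/-- The colored noncommutative Bernstein operator
`𝔹_v = Σ_u Σ_{Q : w(Q^r) = u} (-1)^{ℓ(Q)} H_{v·u} · (Σ_{S ⪰ Q} M_S^⊸)`,
where `Q` runs over all sentences, `u = w(Q^r)` is the concatenation of the words of `Q`
in reverse order, and `S` runs over all coarsenings of `Q`. -/
noncomputable def Bern (v : List A) (f : NSymA A) : NSymA A :=
  ∑ᶠ Q ∈ {Q : Sentence A | IsSentence Q},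
    ((-1 : ℚ)) ^ Q.length •
      mulN (Hw (v ++ Q.reverse.flatten))
        (∑ᶠ S ∈ {S : Sentence A | Refines Q S}, rperp (MQ S) f)

/-- The colored immaculate function `𝔖_J = 𝔹_{v_1} 𝔹_{v_2} ⋯ 𝔹_{v_h}(1)`. -/
noncomputable def ImmS (J : Sentence A) : NSymA A := J.foldr Bern (Hd [])

/-- The colored ribbon function `R_I = Σ_{J ⪰ I} (-1)^{ℓ(J) - ℓ(I)} H_J`. -/
noncomputable def Rib (I : Sentence A) : NSymA A :=
  ∑ᶠ J ∈ {J : Sentence A | Refines I J}, ((-1 : ℚ)) ^ (I.length - J.length) • Hd J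

/-- The Pieri relation `J ⊂_w K` for a sentence `J = (v_1, …, v_h)` and a word `w`:
`K = (u_1, …, u_g)` with `h ≤ g ≤ h+1` (setting `v_{h+1} = ∅`) and `u_j = v_j · q_j`
for words `q_j` (possibly empty) whose reversed concatenation `q_g ⋯ q_1` equals `w`. -/
def PieriRel (J : Sentence A) (w : List A) (K : Sentence A) : Prop :=
  J.length ≤ K.length ∧ K.length ≤ J.length + 1 ∧
  ∃ q : List (List A), q.length = K.length ∧ q.reverse.flatten = w ∧
    ∀ j < K.length, K.getD j [] = J.getD j [] ++ q.getD j []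

/-- Right containment of a weak sentence `K` in `J`: same length, and each word of `K` is a
suffix of the corresponding word of `J`. -/
def RightContained (K J : Sentence A) : Prop :=
  K.length = J.length ∧ ∀ i < J.length, (K.getD i []).IsSuffix (J.getD i [])

/-- The weak sentence `J/_R K`: remove each word of `K` from the right end of the
corresponding word of `J`. -/
def rightQuot (J K : Sentence A) : Sentence A :=
  List.zipWith (fun v u => v.take (v.length - u.length)) J K

/-- Left containment `J ⊆_L I`: `ℓ(J) ≤ ℓ(I)` and each word of `J` is a prefix of the
corresponding word of `I`. -/
def LeftContained (J I : Sentence A) : Prop :=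
  J.length ≤ I.length ∧ ∀ i < J.length, (J.getD i []).IsPrefix (I.getD i [])

/-- A skew colored immaculate tableau of shape `I/J`: a filling of the active boxes
(the `i`-th row keeps the last `|w_i| - |v_i|` boxes) with positive integers, rows weakly
increasing left to right, and the entries in the (active part of the) first column of `I`
strictly increasing top to bottom. -/
def IsSkewCIT (I J : Sentence A) (f : Filling) : Prop :=
  f.map List.length =
    (List.range I.length).map (fun i => (I.getD i []).length - (J.getD i []).length) ∧
  (∀ row ∈ f, row.Chain' (· ≤ ·)) ∧
  ((List.range I.length).filterMap
    (fun i => if (J.getD i []).length = 0 then (f.getD i []).head? else none)).Chain' (· < ·) ∧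
  (∀ x ∈ f.flatten, 1 ≤ x)

/-- The word of the type of a skew tableau at value `v`: the colors of the active boxes with
entry `v`, read left to right, bottom to top. -/
def skewTypeWord (I J : Sentence A) (f : Filling) (v : ℕ) : List A :=
  (((List.range I.length).reverse).map (fun i =>
    rowWith ((I.getD i []).drop (J.getD i []).length) (f.getD i []) v)).flatten

/-- `SkewHasType I J f K` : the skew tableau `f` of shape `I/J` has type `K`. -/
def SkewHasType (I J : Sentence A) (f : Filling) (K : Sentence A) : Prop :=
  ∀ v, 1 ≤ v → skewTypeWord I J f v = K.getD (v - 1) []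

/-! ### The complement involution `ψ` and the row-strict functions -/

/-- The complement `I^c` of a sentence: the unique sentence with the same maximal word
that splits exactly where `I` does not. -/
def complSent (I : Sentence A) : Sentence A :=
  let w := I.flatten
  let n := w.length
  if n = 0 then []
  else
    let splits := (((wl I).scanl (· + ·) 0).drop 1).dropLast
    let csplits := (List.range' 1 (n - 1)).filter (fun i => !(splits.contains i))
    splitByComp w (compOf csplits n)

/-- The `M_I`-coefficient of a colored quasisymmetric function. -/
noncomputable def coeffM (G : QSymA A) (I : Sentence A) : ℚ := G (I, List.range' 1 I.length)

/-- The image of `M_I` under `ψ`, via `M_I = Σ_{J ⪯ I} (-1)^{ℓ(J)-ℓ(I)} F_J` and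
`ψ(F_J) = F_{J^c}`. -/
noncomputable def psiM (I : Sentence A) : QSymA A :=
  ∑ᶠ J ∈ {J : Sentence A | Refines J I}, ((-1 : ℚ)) ^ (J.length - I.length) • FQ (complSent J)

/-- The linear involution `ψ` of `QSym_A`, determined by `ψ(F_I) = F_{I^c}`. -/
noncomputable def psiQ (G : QSymA A) : QSymA A :=
  ∑ᶠ I ∈ {I : Sentence A | IsSentence I}, coeffM G I • psiM I

/-- A colored row-strict immaculate tableau of shape `I`: entries strictly increase left to
right along each row and weakly increase top to bottom down the first column. -/
def IsCRSIT (I : Sentence A) (f : Filling) : Prop :=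
  f.map List.length = I.map List.length ∧
  (∀ row ∈ f, row.Chain' (· < ·)) ∧
  (f.filterMap List.head?).Chain' (· ≤ ·) ∧
  (∀ x ∈ f.flatten, 1 ≤ x)

/-- The word of the type of a row-strict tableau at value `v`: the colors of the boxes with
entry `v`, read left to right, top to bottom. -/
def rsTypeWord (I : Sentence A) (f : Filling) (v : ℕ) : List A :=
  ((I.zip f).map (fun p => rowWith p.1 p.2 v)).flatten

/-- The monomial `x_T` of a colored row-strict immaculate tableau. -/
def rsMonoOf (I : Sentence A) (f : Filling) : Mono A :=
  let vs := ((List.range (maxEntry f)).map (· + 1)).filter (fun v => !(rsTypeWord I f v).isEmpty)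
  (vs.map (rsTypeWord I f), vs)

/-- The colored row-strict dual immaculate function `ℛ𝔖*_J = Σ_T x_T`, summed over all
colored row-strict immaculate tableaux `T` of shape `J`. -/
noncomputable def rsDualImm (J : Sentence A) : QSymA A := fun m =>
  (Set.ncard {f : Filling | IsCRSIT J f ∧ rsMonoOf J f = m} : ℚ)

/-- `α ⪰ β` in the reverse lexicographic order on compositions: at the first index where
they differ, `α` has the *smaller* entry (padding with zeros). -/
def RevLexGE (α β : List ℕ) : Prop :=
  α = β ∨ ∃ i, (∀ j < i, α.getD j 0 = β.getD j 0) ∧ α.getD i 0 < β.getD i 0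

/-! ### Uncolored (ordinary) versions, for `QSym` -/

namespace Uncolored

/-- A composition: a list of positive integers. -/
def IsComposition (α : List ℕ) : Prop := ∀ a ∈ α, 1 ≤ a

/-- `β ⪯ α`: the composition `α` is obtained by summing adjacent parts of `β`. -/
def RefinesC (β α : List ℕ) : Prop :=
  ∃ P : List (List ℕ), (∀ p ∈ P, p ≠ []) ∧ P.flatten = β ∧ P.map List.sum = α

/-- A monomial `x_{i_1}^{a_1} ⋯ x_{i_m}^{a_m}` recorded by its exponents and its
strictly increasing positive indices. -/
abbrev MonoU := List ℕ × List ℕ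

/-- A quasisymmetric "series", recorded by its coefficient function on monomials.
`QSym` is the span of the monomial functions `MU α` inside this space. -/
abbrev QSymU := MonoU → ℚ

/-- Validity of a monomial: matching lengths, strictly increasing positive indices,
positive exponents. -/
def ValidMonoU (m : MonoU) : Prop :=
  m.1.length = m.2.length ∧ m.2.Chain' (· < ·) ∧ (∀ j ∈ m.2, 1 ≤ j) ∧ ∀ a ∈ m.1, 1 ≤ a

open Classical in
/-- The monomial quasisymmetric function `M_α`. -/
noncomputable def MU (α : List ℕ) : QSymU := fun m =>
  if m.1 = α ∧ ValidMonoU m then 1 else 0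

/-- The fundamental quasisymmetric function `F_α = Σ_{β ⪯ α} M_β`. -/
noncomputable def FU (α : List ℕ) : QSymU :=
  ∑ᶠ β ∈ {β : List ℕ | RefinesC β α}, MU β

/-- An immaculate tableau of shape `α`: positive integer entries, rows weakly increasing
left to right, first column strictly increasing top to bottom. -/
def IsIT (α : List ℕ) (f : Filling) : Prop :=
  f.map List.length = α ∧
  (∀ row ∈ f, row.Chain' (· ≤ ·)) ∧
  (f.filterMap List.head?).Chain' (· < ·) ∧
  (∀ x ∈ f.flatten, 1 ≤ x)

/-- The number of boxes of `f` with entry `v`. -/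
def countOf (f : Filling) (v : ℕ) : ℕ := (f.flatten.filter (fun x => x == v)).length

/-- The monomial `x^T` of an immaculate tableau `T` of type `β`:
`x_1^{β_1} ⋯ x_h^{β_h}` (zero exponents skipped). -/
def monoOfU (f : Filling) : MonoU :=
  let vs := ((List.range (maxEntry f)).map (· + 1)).filter (fun v => decide (countOf f v ≠ 0))
  (vs.map (countOf f), vs)

/-- The dual immaculate function `𝔖*_α = Σ_T x^T`, summed over all immaculate tableaux
of shape `α`. -/
noncomputable def dualImmU (α : List ℕ) : QSymU := fun m =>
  (Set.ncard {f : Filling | IsIT α f ∧ monoOfU f = m} : ℚ)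

/-- The descent composition `co(U)` of a standard immaculate tableau. -/
def descComp (f : Filling) : List ℕ :=
  if nBoxes f = 0 then [] else compOf (descList f) (nBoxes f)

/-- `L_{α,β}`: the number of standard immaculate tableaux of shape `α` with descent
composition `β`. -/
noncomputable def LU (α β : List ℕ) : ℕ :=
  Set.ncard {f : Filling | IsIT α f ∧ IsStandardF f ∧ descComp f = β}

/-- Edges of the immaculate descent graph `𝔇^n`. -/
def IsEdgeU (α β : List ℕ) : Prop := β ≠ α ∧ LU α β ≠ 0

/-- Directed paths from `α` to `β` in the immaculate descent graph, recorded by their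
lists of successive vertices; `[α]` is the empty path at `α`. -/
def PathsU (α β : List ℕ) : Set (List (List ℕ)) :=
  {p | p.head? = some α ∧ p.getLast? = some β ∧ p.Chain' IsEdgeU}

/-- The signed weight `(-1)^{ℓ(𝒫)} prod(𝒫)` of a path. -/
noncomputable def pathWeightU (p : List (List ℕ)) : ℚ :=
  ((-1 : ℚ)) ^ (p.length - 1) * ((p.zip p.tail).map (fun e => (LU e.1 e.2 : ℚ))).prod

/-- `L⁻¹_{α,β} = Σ_𝒫 (-1)^{ℓ(𝒫)} prod(𝒫)`, over directed paths from `α` to `β` in `𝔇^n`. -/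
noncomputable def LinvU (α β : List ℕ) : ℚ :=
  ∑ᶠ p ∈ PathsU α β, pathWeightU p

end Uncolored

end ColoredImm

namespace ColoredImm

variable {A : Type*}

/-- The canonical filling with offset `k`: row `i` filled by `k + i + 1`. -/
def canonF : ℕ → Sentence A → Filling
  | _, [] => []
  | k, w :: J => List.replicate w.length (k + 1) :: canonF (k + 1) J

/-- Tableaux with all entries larger than `k`. -/
def CITk (k : ℕ) (J : Sentence A) (f : Filling) : Prop :=
  IsCIT J f ∧ ∀ x ∈ f.flatten, k + 1 ≤ x

/-- Type condition shifted by `k`. -/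
def HTk (k : ℕ) (J : Sentence A) (f : Filling) (C : Sentence A) : Prop :=
  ∀ v, k + 1 ≤ v → typeWord J f v = C.getD (v - (k + 1)) []

lemma citk_cons {k : ℕ} {w : List A} {J : Sentence A} {r : List ℕ} {f : Filling}
    (hs : IsSentence (w :: J)) (h : CITk k (w :: J) (r :: f)) :
    r.length = w.length ∧ (∀ x ∈ r, k + 1 ≤ x) ∧ CITk (k + 1) J f := by
  obtain ⟨⟨h1, h2, h3, h4⟩, h5⟩ := h
  simp only [List.map_cons, List.cons.injEq] at h1
  have hlen := h1.1
  refine ⟨hlen, fun x hx => h5 x (by simp [hx]), ⟨h1.2, fun row hrow => h2 row (by simp [hrow]), ?_,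
    fun x hx => h4 x (by simp only [List.flatten_cons, List.mem_append]; exact Or.inr hx)⟩, ?_⟩
  · have h3' : List.IsChain (· < ·) ((r :: f).filterMap List.head?) := h3
    show List.IsChain (· < ·) (f.filterMap List.head?)
    cases r with
    | nil => exact h3'
    | cons a r' =>
      simp only [List.filterMap_cons, List.head?_cons] at h3'
      exact h3'.tail
  · intro x hx
    have h3' : List.IsChain (· < ·) ((r :: f).filterMap List.head?) := h3
    rw [List.isChain_iff_pairwise] at h3'
    have hw : w ≠ [] := hs w (by simp)
    cases r with
    | nil => simp at hlen; exact absurd hlen.symm (by simpa using hw)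
    | cons a r' =>
      simp only [List.filterMap_cons, List.head?_cons, List.pairwise_cons] at h3'
      obtain ⟨row, hrow, hxr⟩ := List.mem_flatten.1 hx
      have ha : k + 1 ≤ a := h5 a (by simp)
      have hch : List.IsChain (· ≤ ·) row := h2 row (by simp [hrow])
      rw [List.isChain_iff_pairwise] at hch
      cases row with
      | nil => simp at hxr
      | cons b row' =>
        have hab : a < b := h3'.1 b (by
          rw [List.mem_filterMap]; exact ⟨_, hrow, rfl⟩)
        rw [List.pairwise_cons] at hch
        rcases List.mem_cons.1 hxr with rfl | hx'
        · omega
        · have := hch.1 x hx'; omega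

lemma typeWord_nil (f : Filling) (v : ℕ) : typeWord ([] : Sentence A) f v = [] := by
  simp [typeWord]

lemma typeWord_cons (w : List A) (J : Sentence A) (r : List ℕ) (f : Filling) (v : ℕ) :
    typeWord (w :: J) (r :: f) v = typeWord J f v ++ rowWith w r v := by
  simp [typeWord]

lemma rowWith_length (w : List A) (r : List ℕ) (v : ℕ) (h : r.length = w.length) :
    (rowWith w r v).length = r.count v := by
  induction w generalizing r with
  | nil => simp at h; subst h; simp [rowWith]
  | cons a w ih =>
    cases r with
    | nil => simp at h
    | cons b r =>
      have := ih r (by simpa using h)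
      simp only [rowWith, List.length_map] at this
      by_cases hb : b = v
      · subst hb; simp [rowWith, this]
      · simp [rowWith, this, hb]

lemma rowWith_replicate (w : List A) (x v : ℕ) :
    rowWith w (List.replicate w.length x) v = if x = v then w else [] := by
  induction w with
  | nil => simp [rowWith]
  | cons a w ih =>
    by_cases hx : x = v
    · subst hx; simp [rowWith, List.replicate_succ] at ih ⊢; exact ih
    · simp [rowWith, List.replicate_succ, hx] at ih ⊢; exact ih

lemma typeWord_length (J : Sentence A) (f : Filling) (v : ℕ)
    (h : f.map List.length = J.map List.length) :
    (typeWord J f v).length = f.flatten.count v := by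
  induction J generalizing f with
  | nil => simp at h; subst h; simp [typeWord]
  | cons w J ih =>
    cases f with
    | nil => simp at h
    | cons r f =>
      simp only [List.map_cons, List.cons.injEq] at h
      rw [typeWord_cons, List.length_append, ih f h.2, rowWith_length _ _ _ h.1]
      simp [List.count_append]; omega

lemma typeWord_eq_nil_iff (J : Sentence A) (f : Filling) (v : ℕ)
    (h : f.map List.length = J.map List.length) :
    typeWord J f v = [] ↔ v ∉ f.flatten := by
  rw [← List.length_eq_zero_iff, typeWord_length J f v h, List.count_eq_zero]

lemma eq_replicate_of_count {r : List ℕ} {n x : ℕ} (h : r.length = n) (hc : n ≤ r.count x) :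
    r = List.replicate n x := by
  subst h
  have : r.count x = r.length := le_antisymm List.count_le_length hc
  rw [List.count_eq_length] at this
  exact List.eq_replicate_iff.2 ⟨rfl, fun b hb => (this b hb).symm⟩

lemma revLex_cons {a b : ℕ} {α β : List ℕ} (h : RevLexGE (a :: α) (b :: β)) :
    a < b ∨ (a = b ∧ RevLexGE α β) := by
  rcases h with h | ⟨i, h1, h2⟩
  · simp only [List.cons.injEq] at h
    exact Or.inr ⟨h.1, Or.inl h.2⟩
  · cases i with
    | zero => left; simpa using h2
    | succ i =>
      right
      refine ⟨by simpa using h1 0 (by omega), Or.inr ⟨i, fun j hj => ?_, by simpa using h2⟩⟩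
      simpa using h1 (j + 1) (by omega)

lemma key1 (J : Sentence A) : ∀ (k : ℕ) (f : Filling) (C : Sentence A), IsSentence J →
    IsSentence C → size J = size C → RevLexGE (wl J) (wl C) → CITk k J f → HTk k J f C →
    J = C ∧ f = canonF k J := by
  induction J with
  | nil =>
    intro k f C hJ hC hs _ hf _
    have : f = [] := by simpa using hf.1.1
    refine ⟨?_, by simp [this, canonF]⟩
    cases C with
    | nil => rfl
    | cons c C =>
      have := hC c (by simp)
      have : c.length ≠ 0 := by simpa using this
      simp only [size, List.map_nil, List.sum_nil, List.map_cons, List.sum_cons] at hs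
      omega
  | cons w J ih =>
    intro k f C hJ hC hs hr hf ht
    have hw : w ≠ [] := hJ w (by simp)
    have hw' : w.length ≠ 0 := by simpa using hw
    cases f with
    | nil => have := hf.1.1; simp at this
    | cons r f =>
      cases C with
      | nil => simp [size] at hs; simp_all
      | cons c C =>
        obtain ⟨hl, hge, hf'⟩ := citk_cons hJ hf
        have e1 := ht (k + 1) le_rfl
        have e0 : typeWord J f (k + 1) = [] := by
          rw [typeWord_eq_nil_iff _ _ _ hf'.1.1]
          intro hx; have := hf'.2 _ hx; omega
        rw [typeWord_cons, e0] at e1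
        simp at e1
        have hlen := rowWith_length w r (k + 1) hl
        rw [e1] at hlen
        have hcl : r.count (k + 1) ≤ r.length := List.count_le_length
        simp only [wl, List.map_cons] at hr
        rcases revLex_cons hr with h | ⟨h, hr'⟩
        · omega
        · have hrr := eq_replicate_of_count hl (x := k + 1) (by omega)
          have hwc : w = c := by
            rw [← e1, hrr, rowWith_replicate]; simp
          obtain ⟨a, b⟩ := ih (k + 1) f C (fun x hx => hJ x (by simp [hx]))
            (fun x hx => hC x (by simp [hx])) (by
              simp [size] at hs ⊢; omega) hr' hf' (by
              intro v hv
              have := ht v (by omega)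
              rw [typeWord_cons, hrr, rowWith_replicate, if_neg (by omega)] at this
              rw [List.append_nil] at this
              rw [this]
              obtain ⟨d, rfl⟩ : ∃ d, v = k + 1 + 1 + d := ⟨v - (k + 2), by omega⟩
              rw [show k + 1 + 1 + d - (k + 1) = d + 1 by omega,
                show k + 1 + 1 + d - (k + 1 + 1) = d by omega]
              simp)
          exact ⟨by rw [hwc, a], by rw [hrr, b, canonF]⟩

lemma canonF_shape (k : ℕ) (J : Sentence A) :
    (canonF k J).map List.length = J.map List.length := by
  induction J generalizing k with
  | nil => simp [canonF]
  | cons w J ih => simp [canonF, ih]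

lemma canonF_ge (k : ℕ) (J : Sentence A) : ∀ x ∈ (canonF k J).flatten, k + 1 ≤ x := by
  induction J generalizing k with
  | nil => simp [canonF]
  | cons w J ih =>
    intro x hx
    simp only [canonF, List.flatten_cons, List.mem_append, List.mem_replicate] at hx
    rcases hx with hx | hx
    · omega
    · have := ih (k + 1) x hx; omega

lemma canonF_le (k : ℕ) (J : Sentence A) : ∀ x ∈ (canonF k J).flatten, x ≤ k + J.length := by
  induction J generalizing k with
  | nil => simp [canonF]
  | cons w J ih =>
    intro x hx
    simp only [canonF, List.flatten_cons, List.mem_append, List.mem_replicate] at hx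
    simp only [List.length_cons]
    rcases hx with hx | hx
    · omega
    · have := ih (k + 1) x hx; omega

lemma canonF_type (k : ℕ) (J : Sentence A) : HTk k J (canonF k J) J := by
  induction J generalizing k with
  | nil => intro v _; simp [typeWord]
  | cons w J ih =>
    intro v hv
    rw [canonF, typeWord_cons, rowWith_replicate]
    by_cases h : k + 1 = v
    · subst h
      have e0 : typeWord J (canonF (k + 1) J) (k + 1) = [] := by
        rw [typeWord_eq_nil_iff _ _ _ (canonF_shape _ _)]
        intro hx; have := canonF_ge _ _ _ hx; omega
      simp [e0]
    · rw [ih (k + 1) v (by omega), if_neg h, List.append_nil]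
      obtain ⟨d, rfl⟩ : ∃ d, v = k + 1 + 1 + d := ⟨v - (k + 2), by omega⟩
      rw [show k + 1 + 1 + d - (k + 1) = d + 1 by omega,
        show k + 1 + 1 + d - (k + 1 + 1) = d by omega]
      simp

lemma canonF_heads (k : ℕ) (J : Sentence A) :
    List.Pairwise (· < ·) ((canonF k J).filterMap List.head?) := by
  induction J generalizing k with
  | nil => simp [canonF]
  | cons w J ih =>
    rw [canonF]
    cases w with
    | nil => exact ih (k + 1)
    | cons a w =>
      simp only [List.length_cons, List.replicate_succ, List.filterMap_cons, List.head?_cons,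
        List.pairwise_cons]
      refine ⟨fun x hx => ?_, ih (k + 1)⟩
      obtain ⟨row, hrow, hx⟩ := List.mem_filterMap.1 hx
      have := canonF_ge (k + 1) J x (List.mem_flatten.2 ⟨row, hrow, List.mem_of_head? hx⟩)
      omega

lemma canonF_rows (k : ℕ) (J : Sentence A) :
    ∀ row ∈ canonF k J, List.Pairwise (· ≤ ·) row := by
  induction J generalizing k with
  | nil => simp [canonF]
  | cons w J ih =>
    intro row hrow
    rw [canonF, List.mem_cons] at hrow
    rcases hrow with rfl | hrow
    · simp [List.pairwise_replicate]
    · exact ih _ _ hrow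

lemma canonF_cit (J : Sentence A) : IsCIT J (canonF 0 J) := by
  refine ⟨canonF_shape 0 J, fun row hrow => ?_, ?_, fun x hx => by
    have := canonF_ge 0 J x hx; omega⟩
  · exact List.isChain_iff_pairwise.2 (canonF_rows 0 J row hrow)
  · exact List.isChain_iff_pairwise.2 (canonF_heads 0 J)

lemma citk_zero {J : Sentence A} {f : Filling} (h : IsCIT J f) : CITk 0 J f :=
  ⟨h, fun x hx => by have := h.2.2.2 x hx; omega⟩

lemma htk_zero {J : Sentence A} {f : Filling} {C : Sentence A} :
    HTk 0 J f C ↔ HasType J f C := by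
  simp [HTk, HasType]

lemma KJB_exists {J C : Sentence A} (h : KJB J C ≠ 0) : ∃ f, IsCIT J f ∧ HasType J f C := by
  obtain ⟨f, hf⟩ := Set.nonempty_of_ncard_ne_zero h
  exact ⟨f, hf⟩

lemma part1 (J C : Sentence A) (hJ : IsSentence J) (hC : IsSentence C) (hs : size J = size C)
    (hr : RevLexGE (wl J) (wl C)) (h : KJB J C ≠ 0) : J = C := by
  obtain ⟨f, h1, h2⟩ := KJB_exists h
  exact (key1 J 0 f C hJ hC hs hr (citk_zero h1) (htk_zero.2 h2)).1

lemma part2 (J : Sentence A) (hJ : IsSentence J) : KJB J J = 1 := by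
  rw [KJB, Set.ncard_eq_one]
  refine ⟨canonF 0 J, Set.eq_singleton_iff_unique_mem.2 ⟨⟨canonF_cit J,
    htk_zero.1 (canonF_type 0 J)⟩, ?_⟩⟩
  rintro f ⟨h1, h2⟩
  exact (key1 J 0 f J hJ hJ rfl (Or.inl rfl) (citk_zero h1) (htk_zero.2 h2)).2

/-! measure -/

lemma canonF_count (k : ℕ) (C : Sentence A) (v : ℕ) (hv : k + 1 ≤ v) :
    (canonF k C).flatten.count v = (C.getD (v - (k + 1)) []).length := by
  rw [← typeWord_length C _ v (canonF_shape k C), canonF_type k C v hv]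

lemma type_perm {J C : Sentence A} {f : Filling} (h : IsCIT J f) (ht : HasType J f C) :
    f.flatten.Perm (canonF 0 C).flatten := by
  rw [List.perm_iff_count]
  intro v
  rcases Nat.eq_zero_or_pos v with rfl | hv
  · rw [List.count_eq_zero_of_not_mem, List.count_eq_zero_of_not_mem]
    · intro hx; have := canonF_ge 0 C _ hx; omega
    · intro hx; have := h.2.2.2 _ hx; omega
  · rw [canonF_count 0 C v (by omega), ← typeWord_length J f v h.1, ht v hv]

lemma canonF_length (k : ℕ) (C : Sentence A) : (canonF k C).flatten.length = size C := by
  rw [List.length_flatten, canonF_shape, size]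

/-- The statistic used for triangularity. -/
def mu (C : Sentence A) : ℕ := (canonF 0 C).flatten.sum

lemma sentence_length_le (C : Sentence A) (hC : IsSentence C) : C.length ≤ size C := by
  have := List.card_nsmul_le_sum (C.map List.length) 1 (by
    intro x hx
    obtain ⟨w, hw, rfl⟩ := List.mem_map.1 hx
    exact List.length_pos_iff.2 (hC w hw))
  simpa [size] using this

lemma mu_le (C : Sentence A) (hC : IsSentence C) : mu C ≤ size C * size C := by
  have h1 := List.sum_le_card_nsmul (canonF 0 C).flatten (size C) (fun x hx => by
    have := canonF_le 0 C x hx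
    have := sentence_length_le C hC
    omega)
  rw [canonF_length] at h1
  simpa [mu] using h1

lemma sum_ge_canon (J : Sentence A) : ∀ (k : ℕ) (f : Filling), IsSentence J → CITk k J f →
    (canonF k J).flatten.sum < f.flatten.sum ∨ f = canonF k J := by
  induction J with
  | nil =>
    intro k f _ hf
    have : f = [] := by simpa using hf.1.1
    right; simp [this, canonF]
  | cons w J ih =>
    intro k f hJ hf
    cases f with
    | nil => have := hf.1.1; simp at this
    | cons r f =>
      obtain ⟨hl, hge, hf'⟩ := citk_cons hJ hf
      have h1 := ih (k + 1) f (fun x hx => hJ x (by simp [hx])) hf'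
      have h2 : (List.replicate w.length (k + 1)).sum < r.sum ∨
          r = List.replicate w.length (k + 1) := by
        rw [← hl]
        clear hl h1 hf' hf
        induction r with
        | nil => right; simp
        | cons a r ihr =>
          have ha := hge a (by simp)
          rcases ihr (fun x hx => hge x (by simp [hx])) with h | h
          · left; simp only [List.length_cons, List.replicate_succ, List.sum_cons]; omega
          · rcases ha.eq_or_lt with e | e
            · right; simp only [List.length_cons, List.replicate_succ]; rw [← h, ← e]
            · left; simp only [List.length_cons, List.replicate_succ, List.sum_cons]
              rw [← h]; omega
      simp only [canonF, List.flatten_cons, List.sum_append]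
      rcases h1 with h1 | h1 <;> rcases h2 with h2 | h2
      · left; omega
      · left; rw [← h2]; omega
      · left; rw [← h1]; omega
      · right; rw [← h1, ← h2]

lemma sentence_ext {C D : Sentence A} (hC : IsSentence C) (hD : IsSentence D)
    (h : ∀ i, C.getD i [] = D.getD i []) : C = D := by
  have key : ∀ {C D : Sentence A}, IsSentence C → (∀ i, C.getD i [] = D.getD i []) →
      C.length ≤ D.length := by
    intro C D hC h
    by_contra hlt
    push Not at hlt
    have := h D.length
    rw [List.getD_eq_getElem _ _ hlt, List.getD_eq_default _ _ le_rfl] at this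
    exact hC _ (List.getElem_mem hlt) this
  refine List.ext_getElem (le_antisymm (key hC h) (key hD (fun i => (h i).symm))) ?_
  intro i h1 h2
  have := h i
  rwa [List.getD_eq_getElem _ _ h1, List.getD_eq_getElem _ _ h2] at this

lemma KJB_tri {J C : Sentence A} (hJ : IsSentence J) (hC : IsSentence C) (h : KJB J C ≠ 0) :
    C = J ∨ (size C = size J ∧ mu J < mu C) := by
  obtain ⟨f, h1, h2⟩ := KJB_exists h
  have hp := type_perm h1 h2
  rcases sum_ge_canon J 0 f hJ (citk_zero h1) with h3 | h3
  · right
    refine ⟨?_, ?_⟩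
    · rw [← canonF_length 0 C, ← hp.length_eq, List.length_flatten, h1.1, size]
    · rw [mu, mu, ← hp.sum_eq]; exact h3
  · left
    subst h3
    refine sentence_ext hC hJ (fun i => ?_)
    have e1 := h2 (i + 1) (by omega)
    have e2 := canonF_type 0 J (i + 1) (by omega)
    simp only [Nat.add_sub_cancel] at e1
    simp only [Nat.zero_add, Nat.add_sub_cancel] at e2
    rw [← e1, ← e2]

end ColoredImm

namespace ColoredImm

variable {A : Type*}

lemma le_foldr_max (l : List ℕ) : ∀ x ∈ l, x ≤ l.foldr max 0 := by
  induction l with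
  | nil => simp
  | cons a l ih =>
    intro x hx
    rw [List.foldr_cons]
    rcases List.mem_cons.1 hx with rfl | hx
    · exact le_max_left _ _
    · exact (ih x hx).trans (le_max_right _ _)

/-- The support values of a tableau. -/
def vsOf (J : Sentence A) (f : Filling) : List ℕ :=
  ((List.range (maxEntry f)).map (· + 1)).filter (fun v => !(typeWord J f v).isEmpty)

lemma monoOf_eq (J : Sentence A) (f : Filling) :
    monoOf J f = ((vsOf J f).map (typeWord J f), vsOf J f) := rfl

lemma mem_vsOf {J : Sentence A} {f : Filling} (h : IsCIT J f) (v : ℕ) :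
    v ∈ vsOf J f ↔ 1 ≤ v ∧ typeWord J f v ≠ [] := by
  simp only [vsOf, List.mem_filter, List.mem_map, List.mem_range, Bool.not_eq_true',
    List.isEmpty_eq_false_iff]
  constructor
  · rintro ⟨⟨a, _, rfl⟩, h2⟩
    exact ⟨by omega, h2⟩
  · rintro ⟨h1, h2⟩
    refine ⟨⟨v - 1, ?_, by omega⟩, h2⟩
    have : v ∈ f.flatten := by
      by_contra hv
      exact h2 ((typeWord_eq_nil_iff J f v h.1).2 hv)
    have : v ≤ maxEntry f := le_foldr_max _ _ this
    omega

lemma vsOf_sorted (J : Sentence A) (f : Filling) : (vsOf J f).Pairwise (· < ·) := by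
  refine List.Pairwise.filter _ ?_
  rw [List.pairwise_map]
  exact List.pairwise_lt_range.imp (by intro a b h; omega)

lemma monoOf_valid {J : Sentence A} {f : Filling} (h : IsCIT J f) : ValidMono (monoOf J f) := by
  rw [monoOf_eq]
  refine ⟨by simp, List.isChain_iff_pairwise.2 (vsOf_sorted J f),
    fun j hj => ((mem_vsOf h j).1 hj).1, ?_⟩
  intro w hw
  obtain ⟨v, hv, rfl⟩ := List.mem_map.1 hw
  exact ((mem_vsOf h v).1 hv).2

lemma monoOf_eq_iff {J : Sentence A} {f : Filling} (h : IsCIT J f) {C : Sentence A} {js : List ℕ}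
    (hm : ValidMono (C, js)) :
    monoOf J f = (C, js) ↔ ∀ v, 1 ≤ v → typeWord J f v = C.getD (js.idxOf v) [] := by
  obtain ⟨hl, hch, hpos, hne⟩ := hm
  simp only at hl hch hpos hne
  have hch' : js.Pairwise (· < ·) := List.isChain_iff_pairwise.1 hch
  rw [monoOf_eq]
  constructor
  · intro he v hv
    rw [Prod.mk.injEq] at he
    obtain ⟨rfl, rfl⟩ := he
    by_cases hmem : v ∈ vsOf J f
    · have hlt := List.idxOf_lt_length_iff.2 hmem
      rw [List.getD_eq_getElem _ _ (by simpa using hlt), List.getElem_map, List.getElem_idxOf]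
    · rw [List.getD_eq_default _ _ (by
        rw [List.length_map]; exact (List.idxOf_eq_length_iff.2 hmem).ge)]
      by_contra hx
      exact hmem ((mem_vsOf h v).2 ⟨hv, hx⟩)
  · intro ht
    have hvs : vsOf J f = js := by
      refine List.Perm.eq_of_pairwise (le := (· < ·)) (fun a b _ _ h1 h2 => by omega)
        (vsOf_sorted J f) hch' ?_
      rw [List.perm_ext_iff_of_nodup ((vsOf_sorted J f).imp (fun h => ne_of_lt h))
        (hch'.imp (fun h => ne_of_lt h))]
      intro v
      rw [mem_vsOf h]
      constructor
      · rintro ⟨h1, h2⟩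
        rw [ht v h1] at h2
        by_contra hmem
        exact h2 (List.getD_eq_default _ _ (by
          rw [hl]; exact (List.idxOf_eq_length_iff.2 hmem).ge))
      · intro hv
        refine ⟨hpos v hv, ?_⟩
        have hlt := List.idxOf_lt_length_iff.2 hv
        rw [ht v (hpos v hv), List.getD_eq_getElem _ _ (by omega)]
        exact hne _ (List.getElem_mem _)
    rw [hvs, Prod.mk.injEq]
    refine ⟨?_, rfl⟩
    refine List.ext_getElem (by simp [hl]) ?_
    intro i h1 h2
    have h3 : i < js.length := by omega
    rw [List.getElem_map, ht _ (hpos _ (List.getElem_mem h3)),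
      List.Nodup.idxOf_getElem (hch'.imp (fun h => ne_of_lt h)), List.getD_eq_getElem _ _ h2]

/-- Apply a relabelling to a filling. -/
def mapVals (φ : ℕ → ℕ) (f : Filling) : Filling := f.map (List.map φ)

lemma mapVals_flatten (φ : ℕ → ℕ) (f : Filling) : (mapVals φ f).flatten = f.flatten.map φ := by
  simp [mapVals, List.map_flatten]

lemma mapVals_cit {φ : ℕ → ℕ} (hφ : StrictMono φ) (h0 : φ 0 = 0) (J : Sentence A) (f : Filling) :
    IsCIT J (mapVals φ f) ↔ IsCIT J f := by
  have e1 : (mapVals φ f).map List.length = f.map List.length := by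
    simp [mapVals, Function.comp_def]
  have e3 : (mapVals φ f).filterMap List.head? = (f.filterMap List.head?).map φ := by
    rw [mapVals, List.filterMap_map, List.map_filterMap]
    congr 1
    funext l
    simp
  have p2 : (∀ row ∈ mapVals φ f, List.IsChain (· ≤ ·) row) ↔
      ∀ row ∈ f, List.IsChain (· ≤ ·) row := by
    simp only [mapVals, List.forall_mem_map, List.isChain_map, hφ.le_iff_le]
  have p3 : List.IsChain (· < ·) ((mapVals φ f).filterMap List.head?) ↔
      List.IsChain (· < ·) (f.filterMap List.head?) := by
    simp only [e3, List.isChain_map, hφ.lt_iff_lt]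
  have p4 : (∀ x ∈ (mapVals φ f).flatten, 1 ≤ x) ↔ ∀ x ∈ f.flatten, 1 ≤ x := by
    rw [mapVals_flatten, List.forall_mem_map]
    have : ∀ x, 1 ≤ φ x ↔ 1 ≤ x := fun x => by
      have := hφ.lt_iff_lt (a := 0) (b := x)
      rw [h0] at this
      exact this
    simp only [this]
  exact and_congr (by rw [e1]) (and_congr p2 (and_congr p3 p4))

lemma rowWith_mapVals {φ : ℕ → ℕ} (hφ : Function.Injective φ) (w : List A) (r : List ℕ) (v : ℕ) :
    rowWith w (r.map φ) (φ v) = rowWith w r v := by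
  induction w generalizing r with
  | nil => simp [rowWith]
  | cons a w ih =>
    cases r with
    | nil => simp [rowWith]
    | cons b r =>
      have := ih r
      simp only [rowWith] at this
      by_cases hb : b = v
      · subst hb; simp [rowWith, this]
      · simp [rowWith, this, hb, hφ.eq_iff]

lemma typeWord_mapVals {φ : ℕ → ℕ} (hφ : Function.Injective φ) (J : Sentence A) (f : Filling)
    (v : ℕ) : typeWord J (mapVals φ f) (φ v) = typeWord J f v := by
  induction J generalizing f with
  | nil => simp [typeWord]
  | cons w J ih =>
    cases f with
    | nil => simp [typeWord, mapVals]
    | cons r f =>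
      have := ih f
      rw [mapVals] at this
      rw [mapVals, List.map_cons, typeWord_cons, typeWord_cons, this, rowWith_mapVals hφ]

/-- The relabelling sending `i + 1` to the `i`-th element of `js`. -/
def phi (js : List ℕ) (v : ℕ) : ℕ :=
  if v = 0 then 0 else js.getD (v - 1) (js.sum + v)

lemma phi_small (js : List ℕ) (i : ℕ) (h : i < js.length) : phi js (i + 1) = js[i] := by
  simp [phi, h]

lemma phi_large (js : List ℕ) (i : ℕ) (h : js.length ≤ i) :
    phi js (i + 1) = js.sum + (i + 1) := by
  simp [phi, h]

lemma phi_strictMono {js : List ℕ} (hs : js.Pairwise (· < ·)) (hpos : ∀ j ∈ js, 1 ≤ j) :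
    StrictMono (phi js) := by
  refine strictMono_nat_of_lt_succ ?_
  intro n
  cases n with
  | zero =>
    have h0 : phi js 0 = 0 := by simp [phi]
    rw [h0]
    by_cases h : 0 < js.length
    · rw [phi_small js 0 h]; exact hpos _ (List.getElem_mem h)
    · rw [phi_large js 0 (by omega)]; omega
  | succ n =>
    by_cases h : n + 1 < js.length
    · rw [phi_small js _ h, phi_small js n (by omega)]
      exact List.pairwise_iff_getElem.1 hs n (n + 1) (by omega) h (by omega)
    · rw [phi_large js (n + 1) (by omega)]
      by_cases h' : n < js.length
      · rw [phi_small js n h']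
        have := List.le_sum_of_mem (List.getElem_mem h')
        omega
      · rw [phi_large js n (by omega)]; omega

lemma dualImm_valid (J C : Sentence A) (js : List ℕ) (hm : ValidMono (C, js)) :
    dualImm J (C, js) = (KJB J C : ℚ) := by
  have hm' := hm
  obtain ⟨hl, hch, hpos, hne⟩ := hm'
  simp only at hl hch hpos hne
  have hs : js.Pairwise (· < ·) := List.isChain_iff_pairwise.1 hch
  have hnd : js.Nodup := hs.imp (fun h => ne_of_lt h)
  have hφ := phi_strictMono hs hpos
  have h0 : phi js 0 = 0 := by simp [phi]
  have hidx : ∀ v, 1 ≤ v → C.getD (js.idxOf (phi js v)) [] = C.getD (v - 1) [] := by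
    intro v hv
    obtain ⟨i, rfl⟩ : ∃ i, v = i + 1 := ⟨v - 1, by omega⟩
    rw [Nat.add_sub_cancel]
    by_cases h : i < js.length
    · rw [phi_small js i h, hnd.idxOf_getElem]
    · rw [phi_large js i (by omega), List.getD_eq_default _ _ (by omega : C.length ≤ i),
        List.getD_eq_default]
      rw [hl]
      refine (List.idxOf_eq_length_iff.2 ?_).ge
      intro hmem
      have := List.le_sum_of_mem hmem
      omega
  have hposφ : ∀ v, 1 ≤ v → 1 ≤ phi js v := by
    intro v hv
    have := hφ (show 0 < v by omega)
    omega
  rw [dualImm, KJB]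
  congr 1
  rw [← Set.ncard_image_of_injective {f : Filling | IsCIT J f ∧ HasType J f C}
    (f := mapVals (phi js)) (List.map_injective_iff.2 (List.map_injective_iff.2 hφ.injective))]
  congr 1
  ext f
  simp only [Set.mem_setOf_eq, Set.mem_image]
  constructor
  · rintro ⟨h1, h2⟩
    rw [monoOf_eq_iff h1 hm] at h2
    have hran : ∀ x ∈ f.flatten, ∃ y, phi js y = x := by
      intro x hx
      have hx1 := h1.2.2.2 x hx
      have hne' : typeWord J f x ≠ [] := fun h => (typeWord_eq_nil_iff J f x h1.1).1 h hx
      rw [h2 x hx1] at hne'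
      have hmem : x ∈ js := by
        by_contra hmem
        exact hne' (List.getD_eq_default _ _ (by
          rw [hl]; exact (List.idxOf_eq_length_iff.2 hmem).ge))
      have hlt := List.idxOf_lt_length_iff.2 hmem
      exact ⟨js.idxOf x + 1, by rw [phi_small js _ hlt, List.getElem_idxOf]⟩
    have hf : mapVals (phi js) (mapVals (Function.invFun (phi js)) f) = f := by
      rw [mapVals, mapVals, List.map_map]
      conv_rhs => rw [← List.map_id f]
      refine List.map_congr_left (fun r hr => ?_)
      simp only [Function.comp, List.map_map, id]
      conv_rhs => rw [← List.map_id r]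
      refine List.map_congr_left (fun x hx => ?_)
      exact Function.invFun_eq (hran x (List.mem_flatten.2 ⟨r, hr, hx⟩))
    refine ⟨mapVals (Function.invFun (phi js)) f, ⟨?_, ?_⟩, hf⟩
    · rw [← mapVals_cit hφ h0, hf]; exact h1
    · intro v hv
      rw [← typeWord_mapVals hφ.injective, hf, h2 _ (hposφ v hv), hidx v hv]
  · rintro ⟨g, ⟨h1, h2⟩, rfl⟩
    have h1' := (mapVals_cit hφ h0 J g).2 h1
    refine ⟨h1', ?_⟩
    rw [monoOf_eq_iff h1' hm]
    intro v hv
    by_cases hr : ∃ y, phi js y = v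
    · obtain ⟨y, rfl⟩ := hr
      have hy : 1 ≤ y := by
        rcases Nat.eq_zero_or_pos y with rfl | h
        · omega
        · exact h
      rw [typeWord_mapVals hφ.injective, h2 y hy, hidx y hy]
    · rw [(typeWord_eq_nil_iff _ _ _ h1'.1).2, List.getD_eq_default]
      · rw [hl]
        refine (List.idxOf_eq_length_iff.2 ?_).ge
        intro hmem
        have hlt := List.idxOf_lt_length_iff.2 hmem
        exact hr ⟨js.idxOf v + 1, by rw [phi_small js _ hlt, List.getElem_idxOf]⟩
      · rw [mapVals_flatten, List.mem_map]
        rintro ⟨y, _, hy⟩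
        exact hr ⟨y, hy⟩

lemma dualImm_invalid (J : Sentence A) (m : Mono A) (hm : ¬ ValidMono m) : dualImm J m = 0 := by
  rw [dualImm]
  have : {f : Filling | IsCIT J f ∧ monoOf J f = m} = ∅ := by
    ext f
    simp only [Set.mem_setOf_eq, Set.mem_empty_iff_false, iff_false]
    rintro ⟨h1, rfl⟩
    exact hm (monoOf_valid h1)
  rw [this]; simp

lemma rows_finite (N n : ℕ) : {r : List ℕ | r.length = n ∧ ∀ x ∈ r, x ≤ N}.Finite := by
  induction n with
  | zero =>
    refine (Set.finite_singleton ([] : List ℕ)).subset ?_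
    rintro r ⟨h, _⟩
    simpa using h
  | succ n ih =>
    refine (Set.Finite.image2 List.cons (Set.finite_Iic N) ih).subset ?_
    rintro r ⟨h, h2⟩
    cases r with
    | nil => simp at h
    | cons a r =>
      exact ⟨a, h2 a (by simp), r, ⟨by simpa using h, fun x hx => h2 x (by simp [hx])⟩, rfl⟩

lemma fill_finite (N : ℕ) (L : List ℕ) :
    {f : Filling | f.map List.length = L ∧ ∀ r ∈ f, ∀ x ∈ r, x ≤ N}.Finite := by
  induction L with
  | nil =>
    refine (Set.finite_singleton ([] : Filling)).subset ?_
    rintro r ⟨h, _⟩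
    simpa using h
  | cons n L ih =>
    refine (Set.Finite.image2 List.cons (rows_finite N n) ih).subset ?_
    rintro r ⟨h, h2⟩
    cases r with
    | nil => simp at h
    | cons a r =>
      simp only [List.map_cons, List.cons.injEq] at h
      exact ⟨a, ⟨h.1, h2 a (by simp)⟩, r, ⟨h.2, fun x hx => h2 x (by simp [hx])⟩, rfl⟩

lemma range'_valid {C : Sentence A} (hC : IsSentence C) :
    ValidMono (C, List.range' 1 C.length) := by
  refine ⟨by simp, List.isChain_iff_pairwise.2 List.pairwise_lt_range', ?_, hC⟩
  intro j hj
  simp only [List.mem_range'_1] at hj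
  exact hj.1

lemma K_finite (J : Sentence A) :
    {C : {I : Sentence A // IsSentence I} | KJB J C.1 ≠ 0}.Finite := by
  refine Set.Finite.of_finite_image (f := Subtype.val) ?_ Subtype.val_injective.injOn
  refine ((fill_finite (size J) (J.map List.length)).image (fun f => (monoOf J f).1)).subset ?_
  rintro _ ⟨⟨C, hC⟩, hK, rfl⟩
  have hK' : KJB J C ≠ 0 := hK
  have hsz : KJB J C = (Set.ncard {f : Filling | IsCIT J f ∧
      monoOf J f = (C, List.range' 1 C.length)}) := by
    have := dualImm_valid J C _ (range'_valid hC)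
    rw [dualImm] at this
    exact_mod_cast this.symm
  obtain ⟨g, hg1, hg2⟩ := KJB_exists hK'
  have hlen : size C = size J := by
    rw [← canonF_length 0 C, ← (type_perm hg1 hg2).length_eq, List.length_flatten, hg1.1, size]
  rw [hsz] at hK'
  obtain ⟨f, hf1, hf2⟩ := Set.nonempty_of_ncard_ne_zero hK'
  refine ⟨f, ⟨hf1.1, ?_⟩, by simp only [hf2]⟩
  intro r hr x hx
  have hx' : x ∈ f.flatten := List.mem_flatten.2 ⟨r, hr, hx⟩
  have hmem : x ∈ vsOf J f := (mem_vsOf hf1 x).2 ⟨hf1.2.2.2 x hx',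
    fun h => (typeWord_eq_nil_iff J f x hf1.1).1 h hx'⟩
  rw [monoOf_eq, Prod.mk.injEq] at hf2
  rw [hf2.2, List.mem_range'_1] at hmem
  have := sentence_length_le C hC
  omega

/-- Triangular expansion. -/
lemma dualImm_expand (J : Sentence A) :
    dualImm J = ∑ C ∈ (K_finite J).toFinset, (KJB J C.1 : ℚ) • MQ C.1 := by
  classical
  funext m
  rw [Finset.sum_apply]
  by_cases hm : ValidMono m
  · have e : dualImm J m = (KJB J m.1 : ℚ) := dualImm_valid J m.1 m.2 hm
    rw [e]
    have hS : IsSentence m.1 := hm.2.2.2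
    rw [Finset.sum_eq_single (⟨m.1, hS⟩ : {I : Sentence A // IsSentence I})]
    · simp [MQ, hm]
    · intro b _ hb
      have : m.1 ≠ b.1 := fun h => hb (Subtype.ext h.symm)
      simp [MQ, this]
    · intro hn
      simp only [Set.Finite.mem_toFinset, Set.mem_setOf_eq, not_not] at hn
      simp [hn]
  · rw [dualImm_invalid J m hm]
    simp [MQ, hm]

/-- Decreasing statistic. -/
def nu (C : Sentence A) : ℕ := size C * size C - mu C

lemma K_nu {J C : Sentence A} (hJ : IsSentence J) (hC : IsSentence C) (h : KJB J C ≠ 0)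
    (hne : C ≠ J) : nu C < nu J := by
  rcases KJB_tri hJ hC h with h | ⟨h1, h2⟩
  · exact absurd h hne
  · have := mu_le C hC
    rw [nu, nu, ← h1]
    rw [h1] at this ⊢
    omega

lemma MQ_mem (n : ℕ) : ∀ J : {I : Sentence A // IsSentence I}, nu J.1 < n → MQ J.1 ∈
    Submodule.span ℚ (Set.range (fun J : {I : Sentence A // IsSentence I} => dualImm J.1)) := by
  classical
  induction n with
  | zero => intro J h; omega
  | succ n ih =>
    intro J hn
    have hJ : J ∈ (K_finite J.1).toFinset := by
      simp [part2 J.1 J.2]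
    have he := dualImm_expand J.1
    rw [← Finset.add_sum_erase _ _ hJ, part2 J.1 J.2, Nat.cast_one, one_smul] at he
    rw [← sub_eq_iff_eq_add] at he
    rw [← he]
    refine Submodule.sub_mem _ (Submodule.subset_span ⟨J, rfl⟩) (Submodule.sum_mem _ ?_)
    intro C hC
    rw [Finset.mem_erase, Set.Finite.mem_toFinset] at hC
    have := K_nu J.2 C.2 hC.2 (fun h => hC.1 (Subtype.ext h))
    exact Submodule.smul_mem _ _ (ih C (by omega))

lemma part3 : LinearIndependent ℚ
    (fun J : {I : Sentence A // IsSentence I} => dualImm J.1) := by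
  classical
  rw [linearIndependent_iff']
  intro s g hg
  by_contra hcon
  push Not at hcon
  obtain ⟨i, hi, hgi⟩ := hcon
  obtain ⟨j, hj, hmax⟩ := Finset.exists_max_image (s.filter (fun i => g i ≠ 0)) (fun i => nu i.1)
    ⟨i, Finset.mem_filter.2 ⟨hi, hgi⟩⟩
  rw [Finset.mem_filter] at hj
  have h := congrFun hg (j.1, List.range' 1 j.1.length)
  rw [Finset.sum_apply, Finset.sum_eq_single j] at h
  · simp only [Pi.smul_apply, dualImm_valid _ _ _ (range'_valid j.2), part2 j.1 j.2] at h
    exact hj.2 (by simpa using h)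
  · intro b hb hbj
    simp only [Pi.smul_apply, dualImm_valid _ _ _ (range'_valid j.2)]
    by_cases hgb : g b = 0
    · simp [hgb]
    by_cases hK : KJB b.1 j.1 = 0
    · simp [hK]
    exfalso
    have h1 := K_nu b.2 j.2 hK (fun h => hbj (Subtype.ext h.symm))
    have h2 := hmax b (Finset.mem_filter.2 ⟨hb, hgb⟩)
    omega
  · intro hn; exact absurd hj.1 hn

lemma part4 : Submodule.span ℚ
    (Set.range (fun J : {I : Sentence A // IsSentence I} => dualImm J.1)) =
      Submodule.span ℚ (Set.range (fun J : {I : Sentence A // IsSentence I} => MQ J.1)) := by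
  apply le_antisymm
  · rw [Submodule.span_le]
    rintro _ ⟨J, rfl⟩
    simp only [SetLike.mem_coe]
    rw [dualImm_expand]
    exact Submodule.sum_mem _ (fun C _ =>
      Submodule.smul_mem _ _ (Submodule.subset_span ⟨C, rfl⟩))
  · rw [Submodule.span_le]
    rintro _ ⟨J, rfl⟩
    exact MQ_mem _ J (Nat.lt_succ_self _)

end ColoredImm

namespace ColoredImm

/-- Over a totally ordered alphabet: if `J, C` are sentences of equal size
with `wℓ(J) ⪰ wℓ(C)` in reverse lexicographic order and `K_{J,C} ≠ 0`, then `J = C`;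
moreover `K_{J,J} = 1`.  Consequently the transition matrix from the colored dual
immaculate functions to the colored monomial functions is upper unitriangular, and the
colored dual immaculate functions form a basis of `QSym_A` (they are linearly independent
and span the same subspace as the colored monomial functions). -/
theorem statement4 {A : Type*} [LinearOrder A] :
    (∀ J C : Sentence A, IsSentence J → IsSentence C → size J = size C →
        RevLexGE (wl J) (wl C) → KJB J C ≠ 0 → J = C) ∧
    (∀ J : Sentence A, IsSentence J → KJB J J = 1) ∧
    LinearIndependent ℚ (fun J : {I : Sentence A // IsSentence I} => dualImm J.1) ∧
    Submodule.span ℚ (Set.range (fun J : {I : Sentence A // IsSentence I} => dualImm J.1)) =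
      Submodule.span ℚ (Set.range (fun J : {I : Sentence A // IsSentence I} => MQ J.1)) := by
  exact ⟨part1, part2, part3, part4⟩

end ColoredImm
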